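/- Let 𝔭 ⊂ O_k be a prime ideal not containing 2 nor any coefficient of the diagonal admissible form f of dimension n+1. For r ≥ 1, the kernel of the natural reduction homomorphism θ : (Q/𝔭^{r+1}Q)¹ → (Q/𝔭^{r}Q)¹ consists exactly of the elements 1 + Σ_{|M|=2} t_M e_M with t_M ∈ 𝔭^r/𝔭^{r+1}, and has cardinality N(𝔭)^{n(n+1)/2}. -/

import Mathlib

open NumberField CliffordAlgebra

/-!
Let `J ≤ K` be ideals with `K² ≤ J`. For `a ∈ K · Cl(Q)` all terms quadratic in `a` vanish modulo
`J`, so `1 + a` lies in the unit group modulo `J` if and only if `a` satisfies the linearised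
conditions: `a` is even, `a + a* ∈ J`, and `[a, E] ⊆ E + J`. For an orthogonal basis `g_i` of the
generating module `E` the products `e_M` diagonalise the three maps `involute`, `reverse` and
`x ↦ g_i x g_i`. Comparing coordinates, parity kills the odd `M`, the condition on `a + a*` kills
`M = ∅`, and commuting with `g_i` for some `i ∈ M` kills the even `M` with more than two elements,
because `2` and the `Q(g_i)` are regular modulo `J`. Conversely, the products `g_i g_j` satisfy
the linearised conditions exactly. Thus the kernel is an affine copy of one `K/J` for each pair of
indices, and `𝔭^r/𝔭^(r+1)` has as many elements as `O_k/𝔭`.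
-/

namespace CliffordReduction

open Module Submodule

section Modules

variable {R M κ : Type*} [CommRing R] [AddCommGroup M] [Module R M]

theorem mem_range_sup_iff {N : Type*} [AddCommGroup N] [Module R N] {f : M →ₗ[R] N}
    {P : Submodule R N} {x : N} : x ∈ f.range ⊔ P ↔ ∃ y, x - f y ∈ P := by
  simp only [Submodule.mem_sup, LinearMap.mem_range, exists_exists_eq_and, eq_comm (b := x),
    ← sub_eq_iff_eq_add', exists_eq_right']

theorem mul_mem_smul_top {A : Type*} [Ring A] [Algebra R A] {J K : Ideal R} {x y : A}
    (hx : x ∈ J • (⊤ : Submodule R A)) (hy : y ∈ K • (⊤ : Submodule R A)) :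
    x * y ∈ (J * K) • (⊤ : Submodule R A) := by
  rw [Submodule.mul_smul]
  refine smul_induction_on hx (fun r hr z _ => ?_) fun x₁ x₂ h₁ h₂ => ?_
  · rw [smul_mul_assoc]
    exact smul_mem_smul hr (smul_top_le_comap_smul_top K (LinearMap.mulLeft R z) hy)
  · rw [add_mul]
    exact add_mem h₁ h₂

theorem repr_apply_of_diagonal (b : Basis κ R M) (f : M →ₗ[R] M) (μ : κ → R)
    (hf : ∀ i, f (b i) = μ i • b i) (x : M) (i : κ) : b.repr (f x) i = μ i * b.repr x i := by
  have h : (b.coord i).comp f = μ i • b.coord i := b.ext fun j => by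
    obtain rfl | hij := eq_or_ne j i
    · simp [hf]
    · simp [hf, Finsupp.single_eq_of_ne' hij]
  exact LinearMap.congr_fun h x

theorem mem_smul_top_iff_repr_mem (b : Basis κ R M) (J : Ideal R) (x : M) :
    x ∈ J • (⊤ : Submodule R M) ↔ ∀ i, b.repr x i ∈ J := by
  refine ⟨fun hx i => ?_, fun hx => ?_⟩
  · simpa using smul_top_le_comap_smul_top J (b.coord i) hx
  · rw [← b.linearCombination_repr x, Finsupp.linearCombination_apply]
    exact Submodule.sum_mem _ fun i _ => smul_mem_smul (hx i) mem_top

theorem card_mk_add_sum_smul_basis (b : Basis κ R M) [Fintype κ] (J : Ideal R)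
    (N : κ → Ideal R) (m₀ : M) :
    Nat.card {x : M ⧸ J • (⊤ : Submodule R M) | ∃ t : κ → R, (∀ i, t i ∈ N i) ∧
      x = Submodule.Quotient.mk (m₀ + ∑ i, t i • b i)} =
    ∏ i, J.toAddSubgroup.relIndex (N i).toAddSubgroup := by
  let f : (∀ i, N i) →ₗ[R] M ⧸ J • (⊤ : Submodule R M) :=
    (mkQ _).comp (b.equivFun.symm.toLinearMap.comp (LinearMap.piMap fun i => (N i).subtype))
  have hf (t : ∀ i, N i) : f t = Submodule.Quotient.mk (∑ i, (t i : R) • b i) :=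
    congrArg Submodule.Quotient.mk (b.equivFun_symm_apply _)
  have hker : f.ker = Submodule.pi Set.univ fun i => J.submoduleOf (N i) := by
    ext t
    simp only [LinearMap.mem_ker, hf, Submodule.Quotient.mk_eq_zero, mem_smul_top_iff_repr_mem b,
      b.repr_sum_self, Submodule.mem_pi, Set.mem_univ, true_imp_iff, submoduleOf, mem_comap,
      subtype_apply]
  have hset : {x : M ⧸ J • (⊤ : Submodule R M) | ∃ t : κ → R, (∀ i, t i ∈ N i) ∧
      x = Submodule.Quotient.mk (m₀ + ∑ i, t i • b i)} =
      (Submodule.Quotient.mk m₀ + ·) '' Set.range f := by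
    ext x
    constructor
    · rintro ⟨t, ht, rfl⟩
      exact ⟨_, ⟨fun i => ⟨t i, ht i⟩, rfl⟩, by simp only [hf, Submodule.Quotient.mk_add]⟩
    · rintro ⟨_, ⟨t, rfl⟩, rfl⟩
      exact ⟨fun i => t i, fun i => (t i).2, by simp only [hf, Submodule.Quotient.mk_add]⟩
  classical
  rw [hset, Nat.card_image_of_injective (add_right_injective _)]
  calc Nat.card (Set.range f)
      = Nat.card ((∀ i, N i) ⧸ Submodule.pi Set.univ fun i => J.submoduleOf (N i)) := by
        rw [← hker]; exact (Nat.card_congr f.quotKerEquivRange.toEquiv).symm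
    _ = Nat.card (∀ i, N i ⧸ J.submoduleOf (N i)) := Nat.card_congr (quotientPi _).toEquiv
    _ = ∏ i, J.toAddSubgroup.relIndex (N i).toAddSubgroup := Nat.card_pi

theorem card_mk_add_sum_smul_basis_of_support (b : Basis κ R M) [Fintype κ] (I J : Ideal R)
    (p : κ → Prop) [DecidablePred p] (m₀ : M) :
    Nat.card {x : M ⧸ J • (⊤ : Submodule R M) | ∃ t : κ → R, (∀ i, t i ∈ I) ∧
      (∀ i, ¬p i → t i = 0) ∧ x = Submodule.Quotient.mk (m₀ + ∑ i, t i • b i)} =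
    J.toAddSubgroup.relIndex I.toAddSubgroup ^ Fintype.card {i // p i} := by
  have mem_ite (t : κ → R) : (∀ i, t i ∈ I) ∧ (∀ i, ¬p i → t i = 0) ↔
      ∀ i, t i ∈ if p i then I else ⊥ := by
    rw [← forall_and]
    refine forall_congr' fun i => ?_
    split_ifs with hi <;> simp +contextual [hi]
  simp only [← and_assoc, mem_ite, card_mk_add_sum_smul_basis]
  simp_rw [apply_ite (Submodule.toAddSubgroup (R := R)),
    apply_ite (AddSubgroup.relIndex J.toAddSubgroup), Submodule.bot_toAddSubgroup,
    AddSubgroup.relIndex_bot_right]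
  rw [← Finset.prod_filter, Finset.prod_const, Fintype.card_subtype]

end Modules

section OrderedProducts

variable {I A : Type*} [LinearOrder I]

/-- The product of the `g i`, `i ∈ M`, in increasing order of the index.  When `g` lists the
generators of a Clifford algebra, this is the standard basis element `e_M`. -/
def orderedProd [Monoid A] (g : I → A) (M : Finset I) : A :=
  ((M.sort (· ≤ ·)).map g).prod

theorem orderedProd_empty [Monoid A] (g : I → A) : orderedProd g ∅ = 1 := by
  simp [orderedProd]

theorem orderedProd_insert [Monoid A] (g : I → A) {i : I} {M : Finset I} (hi : ∀ j ∈ M, i < j) :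
    orderedProd g (insert i M) = g i * orderedProd g M := by
  rw [orderedProd, Finset.sort_insert (· ≤ ·) (fun j hj => (hi j hj).le)
    fun h => (hi i h).false, List.map_cons, List.prod_cons, orderedProd]

theorem orderedProd_singleton [Monoid A] (g : I → A) (i : I) : orderedProd g {i} = g i := by
  simp [orderedProd]

theorem orderedProd_pair [Monoid A] (g : I → A) {i j : I} (hij : i < j) :
    orderedProd g {i, j} = g i * g j := by
  rw [orderedProd_insert g (by simpa using hij), orderedProd_singleton]

theorem exists_orderedProd_eq_mul [Monoid A] (g : I → A) {M : Finset I} (hM : M.card = 2) :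
    ∃ i j, i ≠ j ∧ orderedProd g M = g i * g j := by
  obtain ⟨i, j, hij, rfl⟩ := Finset.card_eq_two.1 hM
  obtain h | h := hij.lt_or_gt
  · exact ⟨i, j, hij, orderedProd_pair g h⟩
  · exact ⟨j, i, hij.symm, by rw [Finset.pair_comm, orderedProd_pair g h]⟩

theorem orderedProd_mul_of_anticommute (R : Type*) [CommRing R] [Ring A] [Algebra R A] {g : I → A}
    (hg : Pairwise fun i j => g i * g j = -(g j * g i)) (M : Finset I) (i : I) :
    orderedProd g M * g i = (-1 : R) ^ (M.erase i).card • (g i * orderedProd g M) := by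
  induction M using Finset.induction_on_min with
  | empty => simp [orderedProd_empty]
  | insert a M ha ih =>
    have haM : a ∉ M := fun h => (ha a h).false
    rw [orderedProd_insert g ha, mul_assoc, ih, mul_smul_comm]
    obtain rfl | hai := eq_or_ne a i
    · rw [Finset.erase_insert haM, Finset.erase_eq_of_notMem haM]
    · rw [Finset.erase_insert_of_ne hai, Finset.card_insert_of_notMem (by simp [haM]),
        ← mul_assoc, hg hai, pow_succ, mul_neg_one, neg_smul, neg_mul, smul_neg, mul_assoc]

end OrderedProducts

section CliffordBasis

variable {R V I : Type*} [CommRing R] [AddCommGroup V] [Module R V] [LinearOrder I]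

theorem contractLeft_orderedProd {Q : QuadraticForm R V} (d : Dual R V) {v : I → V}
    {M : Finset I} (hd : ∀ i ∈ M, d (v i) = 0) :
    CliffordAlgebra.contractLeft d (orderedProd (fun i => ι Q (v i)) M) = 0 := by
  induction M using Finset.induction_on_min with
  | empty => rw [orderedProd_empty, contractLeft_one]
  | insert a M ha ih =>
    rw [orderedProd_insert _ ha, contractLeft_ι_mul,
      ih fun i hi => hd i (Finset.mem_insert_of_mem hi),
      hd a (Finset.mem_insert_self a M), zero_smul, mul_zero, sub_zero]

theorem changeForm_orderedProd {Q Q' : QuadraticForm R V} {B : LinearMap.BilinForm R V}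
    (h : B.toQuadraticMap = Q' - Q) {v : I → V} (hB : ∀ i j, i < j → B (v i) (v j) = 0)
    (M : Finset I) :
    changeForm h (orderedProd (fun i => ι Q (v i)) M) = orderedProd (fun i => ι Q' (v i)) M := by
  induction M using Finset.induction_on_min with
  | empty => rw [orderedProd_empty, orderedProd_empty, changeForm_one]
  | insert a M ha ih =>
    rw [orderedProd_insert _ ha, orderedProd_insert _ ha, changeForm_ι_mul, ih,
      contractLeft_orderedProd _ fun j hj => hB a j (ha j hj), sub_zero]

theorem exteriorAlgebra_basis_eq_orderedProd (b : Basis I R V) (M : Finset I) :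
    b.ExteriorAlgebra M = orderedProd (fun i => ExteriorAlgebra.ι R (b i)) M := by
  rw [ExteriorAlgebra.basis_apply_ofCard b rfl, ExteriorAlgebra.ιMulti_family,
    ExteriorAlgebra.ιMulti_apply, orderedProd]
  congr 1
  refine List.ext_getElem (by simp) fun m _ _ => ?_
  simp [Set.powersetCard.ofFinEmbEquiv_symm_apply, Finset.orderEmbOfFin_apply]

theorem toQuadraticMap_flip_neg_toBilin (Q : QuadraticForm R V) (b : Basis I R V) :
    LinearMap.BilinMap.toQuadraticMap (-(Q.toBilin b).flip) = 0 - Q := by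
  ext x
  simpa using DFunLike.congr_fun (QuadraticMap.toQuadraticMap_toBilin Q b) x

/-- The standard basis `e_M` of the Clifford algebra of a form on a free module.  It is the exterior
algebra basis transported along `changeForm`; the bilinear form used there is the one that is
triangular in `b`, so that ordered products are carried to ordered products. -/
noncomputable def cliffordBasis (Q : QuadraticForm R V) (b : Basis I R V) :
    Basis (Finset I) R (CliffordAlgebra Q) :=
  b.ExteriorAlgebra.map (changeFormEquiv (toQuadraticMap_flip_neg_toBilin Q b)).symm

theorem cliffordBasis_apply (Q : QuadraticForm R V) (b : Basis I R V) (M : Finset I) :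
    cliffordBasis Q b M = orderedProd (fun i => ι Q (b i)) M := by
  rw [cliffordBasis, Basis.map_apply, LinearEquiv.symm_apply_eq, changeFormEquiv_apply,
    changeForm_orderedProd, exteriorAlgebra_basis_eq_orderedProd]
  intro i j hij
  simp [QuadraticMap.toBilin_apply, hij.ne', hij.not_gt]

end CliffordBasis

section OrthogonalGenerators

variable {R V I : Type*} [CommRing R] [AddCommGroup V] [Module R V] [LinearOrder I]
  {Q : QuadraticForm R V}

theorem orderedProd_mul_ι_of_isOrtho {v : I → V} (hv : Pairwise fun i j => Q.IsOrtho (v i) (v j))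
    (M : Finset I) (i : I) :
    orderedProd (fun j => ι Q (v j)) M * ι Q (v i) =
      (-1 : R) ^ (M.erase i).card • (ι Q (v i) * orderedProd (fun j => ι Q (v j)) M) :=
  orderedProd_mul_of_anticommute R (fun _ _ hij => ι_mul_ι_comm_of_isOrtho (hv hij)) M i

theorem ι_mul_orderedProd_mul_ι_of_isOrtho {v : I → V}
    (hv : Pairwise fun i j => Q.IsOrtho (v i) (v j)) (M : Finset I) (i : I) :
    ι Q (v i) * orderedProd (fun j => ι Q (v j)) M * ι Q (v i) =
      ((-1) ^ (M.erase i).card * Q (v i)) • orderedProd (fun j => ι Q (v j)) M := by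
  rw [mul_assoc, orderedProd_mul_ι_of_isOrtho hv, mul_smul_comm, ← mul_assoc, ι_sq_scalar,
    ← Algebra.smul_def, smul_smul]

theorem involute_orderedProd (v : I → V) (M : Finset I) :
    involute (orderedProd (fun i => ι Q (v i)) M) =
      (-1 : R) ^ M.card • orderedProd (fun i => ι Q (v i)) M := by
  simpa [orderedProd, Function.comp_def] using
    involute_prod_map_ι (Q := Q) ((M.sort (· ≤ ·)).map v)

theorem reverse_orderedProd_of_isOrtho {v : I → V}
    (hv : Pairwise fun i j => Q.IsOrtho (v i) (v j)) (M : Finset I) :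
    reverse (orderedProd (fun i => ι Q (v i)) M) =
      (-1 : R) ^ M.card.choose 2 • orderedProd (fun i => ι Q (v i)) M := by
  induction M using Finset.induction_on_min with
  | empty => simp [orderedProd_empty]
  | insert i M hi ih =>
    have hiM : i ∉ M := fun h => (hi i h).false
    rw [orderedProd_insert _ hi, reverse.map_mul, ih, reverse_ι, smul_mul_assoc,
      orderedProd_mul_ι_of_isOrtho hv, Finset.erase_eq_of_notMem hiM, smul_smul, ← pow_add,
      Finset.card_insert_of_notMem hiM, Nat.choose_succ_succ' M.card 1, Nat.choose_one_right,
      add_comm]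

theorem repr_involute (b : Basis I R V) (x : CliffordAlgebra Q) (M : Finset I) :
    (cliffordBasis Q b).repr (involute x) M = (-1) ^ M.card * (cliffordBasis Q b).repr x M :=
  repr_apply_of_diagonal (cliffordBasis Q b) involute.toLinearMap (fun M => (-1) ^ M.card)
    (fun M => by
      simp only [cliffordBasis_apply, AlgHom.toLinearMap_apply, involute_orderedProd]) x M

theorem repr_reverse_of_isOrtho {b : Basis I R V}
    (hb : Pairwise fun i j => Q.IsOrtho (b i) (b j)) (x : CliffordAlgebra Q) (M : Finset I) :
    (cliffordBasis Q b).repr (reverse x) M =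
      (-1) ^ M.card.choose 2 * (cliffordBasis Q b).repr x M :=
  repr_apply_of_diagonal (cliffordBasis Q b) reverse (fun M => (-1) ^ M.card.choose 2)
    (fun M => by simp only [cliffordBasis_apply, reverse_orderedProd_of_isOrtho hb]) x M

theorem repr_ι_mul_mul_ι_of_isOrtho {b : Basis I R V}
    (hb : Pairwise fun i j => Q.IsOrtho (b i) (b j)) (x : CliffordAlgebra Q) (i : I)
    (M : Finset I) :
    (cliffordBasis Q b).repr (ι Q (b i) * x * ι Q (b i)) M =
      (-1) ^ (M.erase i).card * Q (b i) * (cliffordBasis Q b).repr x M :=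
  repr_apply_of_diagonal (cliffordBasis Q b) (LinearMap.mulLeftRight R (ι Q (b i), ι Q (b i)))
    (fun M => (-1) ^ (M.erase i).card * Q (b i))
    (fun M => by
      simp only [cliffordBasis_apply, LinearMap.mulLeftRight_apply,
        ι_mul_orderedProd_mul_ι_of_isOrtho hb]) x M

theorem repr_ι_mul_ι_of_isOrtho {b : Basis I R V}
    (hb : Pairwise fun i j => Q.IsOrtho (b i) (b j)) (i : I) (v : V) {M : Finset I}
    (hM : 2 < M.card) : (cliffordBasis Q b).repr (ι Q (b i) * ι Q v) M = 0 := by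
  set e := cliffordBasis Q b with he
  have repr_basis {N : Finset I} (hN : N.card ≤ 2) : e.repr (e N) M = 0 := by
    rw [e.repr_self_apply, if_neg]
    rintro rfl
    exact hN.not_gt hM
  have pair {j l : I} (hjl : j < l) : ι Q (b j) * ι Q (b l) = e {j, l} := by
    rw [he, cliffordBasis_apply, orderedProd_pair _ hjl]
  suffices (e.coord M).comp ((LinearMap.mulLeft R (ι Q (b i))).comp (ι Q)) = 0 from
    LinearMap.congr_fun this v
  refine b.ext fun j => ?_
  simp only [LinearMap.comp_apply, LinearMap.mulLeft_apply, Basis.coord_apply, LinearMap.zero_apply]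
  obtain hij | rfl | hij := lt_trichotomy i j
  · rw [pair hij, repr_basis Finset.card_le_two]
  · have empty : e ∅ = 1 := by rw [he, cliffordBasis_apply, orderedProd_empty]
    rw [ι_sq_scalar, Algebra.algebraMap_eq_smul_one, ← empty, map_smul, Finsupp.smul_apply,
      repr_basis (by simp), smul_zero]
  · rw [ι_mul_ι_comm_of_isOrtho (hb hij.ne'), pair hij, map_neg, Finsupp.neg_apply,
      repr_basis Finset.card_le_two, neg_zero]

end OrthogonalGenerators

section SpinTangent

variable {R V : Type*} [CommRing R] [AddCommGroup V] [Module R V] {Q : QuadraticForm R V}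

/-- The tangent space at `1` of the conditions in `IsReducedUnit J`, which is to say the Lie algebra
of the spin group modulo `J`. -/
def spinTangent (J : Submodule R (CliffordAlgebra Q)) : Submodule R (CliffordAlgebra Q) :=
  evenOdd Q 0 ⊓ J.comap (LinearMap.id + reverse) ⊓
    ⨅ v, ((ι Q).range ⊔ J).comap (LinearMap.mulRight R (ι Q v) - LinearMap.mulLeft R (ι Q v))

theorem mem_spinTangent {J : Submodule R (CliffordAlgebra Q)} {a : CliffordAlgebra Q} :
    a ∈ spinTangent J ↔ a ∈ evenOdd Q 0 ∧ a + reverse a ∈ J ∧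
      ∀ v, a * ι Q v - ι Q v * a ∈ (ι Q).range ⊔ J := by
  simp [spinTangent, and_assoc]

theorem ι_mul_ι_mul_ι_sub (u v w : V) :
    ι Q u * ι Q v * ι Q w - ι Q w * (ι Q u * ι Q v) =
      ι Q (QuadraticMap.polar Q v w • u - QuadraticMap.polar Q w u • v) := by
  calc ι Q u * ι Q v * ι Q w - ι Q w * (ι Q u * ι Q v)
      = ι Q u * (ι Q v * ι Q w + ι Q w * ι Q v) - (ι Q w * ι Q u + ι Q u * ι Q w) * ι Q v := by
        noncomm_ring
    _ = ι Q (QuadraticMap.polar Q v w • u - QuadraticMap.polar Q w u • v) := by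
        rw [ι_mul_ι_add_swap, ι_mul_ι_add_swap, ← Algebra.commutes, ← Algebra.smul_def,
          ← Algebra.smul_def, map_sub, map_smul, map_smul]

theorem ι_mul_ι_mem_spinTangent (J : Submodule R (CliffordAlgebra Q)) {u v : V}
    (h : Q.IsOrtho u v) : ι Q u * ι Q v ∈ spinTangent J := by
  refine mem_spinTangent.2 ⟨ι_mul_ι_mem_evenOdd_zero Q u v, ?_, fun w => ?_⟩
  · rw [reverse.map_mul, reverse_ι, reverse_ι, ι_mul_ι_add_swap_of_isOrtho h]
    exact J.zero_mem
  · rw [ι_mul_ι_mul_ι_sub]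
    exact mem_sup_left (LinearMap.mem_range_self _ _)

end SpinTangent

section ReducedUnits

variable {R V : Type*} [CommRing R] [AddCommGroup V] [Module R V] {Q : QuadraticForm R V}

/-- `s` represents an element of `(Q/J)¹`, where `Q` is the even Clifford order: it is even, and
`s s* = 1` and `s E s* ⊆ E` hold modulo `J`, with `E` the image of `ι`.  When `J` is a
two-sided ideal of finite index, `x ↦ s x s*` is injective modulo `J` and the inclusion is an
equality. -/
def IsReducedUnit (J : Submodule R (CliffordAlgebra Q)) (s : CliffordAlgebra Q) : Prop :=
  s ∈ evenOdd Q 0 ∧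
    Submodule.Quotient.mk (p := J) (s * reverse s) = Submodule.Quotient.mk 1 ∧
    ∀ v, ∃ w, Submodule.Quotient.mk (p := J) (s * ι Q v * reverse s) =
      Submodule.Quotient.mk (ι Q w)

/-- The kernel of the reduction map `(Q/J₁)¹ → (Q/J₂)¹`, as a subset of the quotient module of the
full Clifford algebra.  The second condition runs over all lifts of `x`; for `J₁ ≤ J₂` one lift is
enough. -/
def congruenceKernel (J₁ J₂ : Submodule R (CliffordAlgebra Q)) : Set (CliffordAlgebra Q ⧸ J₁) :=
  {x | (∃ s, Submodule.Quotient.mk s = x ∧ IsReducedUnit J₁ s) ∧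
    ∀ s, Submodule.Quotient.mk s = x →
      Submodule.Quotient.mk (p := J₂) s = Submodule.Quotient.mk 1}

theorem mem_congruenceKernel_iff {J₁ J₂ : Submodule R (CliffordAlgebra Q)} (hJ : J₁ ≤ J₂)
    {x : CliffordAlgebra Q ⧸ J₁} :
    x ∈ congruenceKernel J₁ J₂ ↔
      ∃ a ∈ J₂, IsReducedUnit J₁ (1 + a) ∧ Submodule.Quotient.mk (1 + a) = x := by
  constructor
  · rintro ⟨⟨s, hsx, hs⟩, hx⟩
    exact ⟨s - 1, (Submodule.Quotient.eq J₂).1 (hx s hsx), by rwa [add_sub_cancel],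
      by rwa [add_sub_cancel]⟩
  · rintro ⟨a, ha, hu, rfl⟩
    refine ⟨⟨1 + a, rfl, hu⟩, fun s hs => ?_⟩
    have hs' := hJ ((Submodule.Quotient.eq J₁).1 hs)
    rw [Submodule.Quotient.eq, ← sub_add_sub_cancel s (1 + a) 1, add_sub_cancel_left]
    exact add_mem hs' ha

theorem isReducedUnit_one_add_iff {J K : Ideal R} (hK : K * K ≤ J) {a : CliffordAlgebra Q}
    (ha : a ∈ K • (⊤ : Submodule R (CliffordAlgebra Q))) :
    IsReducedUnit (J • ⊤) (1 + a) ↔ a ∈ spinTangent (Q := Q) (J • ⊤) := by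
  have smul_le : (K * K) • (⊤ : Submodule R (CliffordAlgebra Q)) ≤ J • ⊤ := smul_mono_left hK
  have hra : reverse a ∈ K • (⊤ : Submodule R (CliffordAlgebra Q)) :=
    smul_top_le_comap_smul_top K reverse ha
  have even_iff : 1 + a ∈ evenOdd Q 0 ↔ a ∈ evenOdd Q 0 :=
    Submodule.add_mem_iff_right _ SetLike.GradedOne.one_mem
  have norm_iff : (1 + a) * reverse (1 + a) - 1 ∈ J • (⊤ : Submodule R (CliffordAlgebra Q)) ↔
      a + reverse a ∈ J • (⊤ : Submodule R (CliffordAlgebra Q)) := by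
    rw [show (1 + a) * reverse (1 + a) - 1 = a + reverse a + a * reverse a by
      rw [map_add, reverse.map_one]; noncomm_ring]
    exact Submodule.add_mem_iff_left _ (smul_le (mul_mem_smul_top ha hra))
  rw [mem_spinTangent, IsReducedUnit, Submodule.Quotient.eq, even_iff, norm_iff]
  refine and_congr_right fun _ => and_congr_right fun htr => forall_congr' fun v => ?_
  have hquad : a * ι Q v * reverse a ∈ J • (⊤ : Submodule R (CliffordAlgebra Q)) :=
    smul_le (mul_mem_smul_top
      (smul_top_le_comap_smul_top K (LinearMap.mulRight R (ι Q v)) ha) hra)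
  have hlin : ι Q v * (a + reverse a) ∈ J • (⊤ : Submodule R (CliffordAlgebra Q)) :=
    smul_top_le_comap_smul_top J (LinearMap.mulLeft R (ι Q v)) htr
  have conj_sub (w : V) : (1 + a) * ι Q v * reverse (1 + a) - ι Q w =
      a * ι Q v - ι Q v * a - ι Q (w - v) + (ι Q v * (a + reverse a) + a * ι Q v * reverse a) := by
    rw [map_add, reverse.map_one, map_sub]
    noncomm_ring
  simp only [Submodule.Quotient.eq, conj_sub,
    Submodule.add_mem_iff_left _ (add_mem hlin hquad), mem_range_sup_iff]
  exact ((Equiv.subRight v).exists_congr_left).trans (by simp)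

end ReducedUnits

section TangentCoordinates

variable {R V I : Type*} [CommRing R] [AddCommGroup V] [Module R V] [LinearOrder I]
  {Q : QuadraticForm R V} {J : Ideal R} {a : CliffordAlgebra Q}

theorem repr_mem_of_odd_card (b : Basis I R V) (h2 : IsSMulRegular (R ⧸ J) (2 : R))
    (ha : a ∈ evenOdd Q 0) {M : Finset I} (hM : Odd M.card) : (cliffordBasis Q b).repr a M ∈ J := by
  have h := repr_involute b a M
  rw [involute_eq_of_mem_even ha, hM.neg_one_pow, neg_one_mul] at h
  refine mem_of_isSMulRegular_quotient_of_smul_mem h2 ?_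
  rw [two_smul]
  nth_rw 1 [h]
  rw [neg_add_cancel]
  exact J.zero_mem

theorem repr_empty_mem {b : Basis I R V} (hb : Pairwise fun i j => Q.IsOrtho (b i) (b j))
    (h2 : IsSMulRegular (R ⧸ J) (2 : R))
    (ha : a + reverse a ∈ J • (⊤ : Submodule R (CliffordAlgebra Q))) :
    (cliffordBasis Q b).repr a ∅ ∈ J := by
  have h := (mem_smul_top_iff_repr_mem (cliffordBasis Q b) J _).1 ha ∅
  rw [map_add, Finsupp.add_apply, repr_reverse_of_isOrtho hb, Finset.card_empty,
    Nat.choose_zero_succ, pow_zero, one_mul, ← two_smul R] at h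
  exact mem_of_isSMulRegular_quotient_of_smul_mem h2 h

theorem repr_mem_of_even_card {b : Basis I R V} (hb : Pairwise fun i j => Q.IsOrtho (b i) (b j))
    (h2 : IsSMulRegular (R ⧸ J) (2 : R)) {M : Finset I} (hM : Even M.card) (hM2 : 2 < M.card)
    {i : I} (hi : i ∈ M) (hQ : IsSMulRegular (R ⧸ J) (Q (b i)))
    (ha : a * ι Q (b i) - ι Q (b i) * a ∈
      (ι Q).range ⊔ J • (⊤ : Submodule R (CliffordAlgebra Q))) :
    (cliffordBasis Q b).repr a M ∈ J := by
  set g := ι Q (b i)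
  obtain ⟨w, hw⟩ := mem_range_sup_iff.1 ha
  have h := (mem_smul_top_iff_repr_mem (cliffordBasis Q b) J _).1
    (smul_top_le_comap_smul_top J (LinearMap.mulLeft R g) hw) M
  have expand : g * (a * g - g * a - ι Q w) = g * a * g - Q (b i) • a - g * ι Q w := by
    rw [Algebra.smul_def, ← ι_sq_scalar]
    noncomm_ring
  have hodd : Odd (M.erase i).card := by
    rw [Finset.card_erase_of_mem hi]
    exact Nat.Even.sub_odd (by omega) hM odd_one
  rw [LinearMap.mulLeft_apply, expand, map_sub, map_sub, map_smul, Finsupp.sub_apply,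
    Finsupp.sub_apply, Finsupp.smul_apply, repr_ι_mul_mul_ι_of_isOrtho hb,
    repr_ι_mul_ι_of_isOrtho hb i w hM2, hodd.neg_one_pow] at h
  refine mem_of_isSMulRegular_quotient_of_smul_mem h2
    (mem_of_isSMulRegular_quotient_of_smul_mem hQ (J.neg_mem_iff.1 ?_))
  convert h using 1
  simp only [smul_eq_mul]
  ring

theorem repr_mem_of_mem_spinTangent {b : Basis I R V}
    (hb : Pairwise fun i j => Q.IsOrtho (b i) (b j)) (h2 : IsSMulRegular (R ⧸ J) (2 : R))
    (hQ : ∀ i, IsSMulRegular (R ⧸ J) (Q (b i)))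
    (ha : a ∈ spinTangent (J • (⊤ : Submodule R (CliffordAlgebra Q)))) {M : Finset I}
    (hM : M.card ≠ 2) : (cliffordBasis Q b).repr a M ∈ J := by
  obtain ⟨heven, hreverse, hcomm⟩ := mem_spinTangent.1 ha
  obtain hodd | heven' := (Nat.even_or_odd M.card).symm
  · exact repr_mem_of_odd_card b h2 heven hodd
  obtain rfl | ⟨i, hi⟩ := M.eq_empty_or_nonempty
  · exact repr_empty_mem hb h2 hreverse
  · have hpos : 0 < M.card := Finset.card_pos.2 ⟨i, hi⟩
    have hlt : 2 < M.card := by obtain ⟨m, hm⟩ := heven'; omega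
    exact repr_mem_of_even_card hb h2 heven' hlt hi (hQ i) (hcomm (b i))

theorem orderedProd_mem_spinTangent {v : I → V} (hv : Pairwise fun i j => Q.IsOrtho (v i) (v j))
    (P : Submodule R (CliffordAlgebra Q)) {M : Finset I} (hM : M.card = 2) :
    orderedProd (fun i => ι Q (v i)) M ∈ spinTangent P := by
  obtain ⟨i, j, hij, h⟩ := exists_orderedProd_eq_mul (fun i => ι Q (v i)) hM
  rw [h]
  exact ι_mul_ι_mem_spinTangent P (hv hij)

end TangentCoordinates

section Kernel

variable {R V I : Type*} [CommRing R] [AddCommGroup V] [Module R V] [LinearOrder I] [Fintype I]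
  {Q : QuadraticForm R V} {b : Basis I R V} {J K : Ideal R}

theorem congruenceKernel_eq (hb : Pairwise fun i j => Q.IsOrtho (b i) (b j))
    (hJK : J ≤ K) (hKJ : K * K ≤ J) (h2 : IsSMulRegular (R ⧸ J) (2 : R))
    (hQ : ∀ i, IsSMulRegular (R ⧸ J) (Q (b i))) :
    congruenceKernel (Q := Q) (J • ⊤) (K • ⊤) =
      {x | ∃ t : Finset I → R, (∀ M, t M ∈ K) ∧ (∀ M, M.card ≠ 2 → t M = 0) ∧
        x = Submodule.Quotient.mk (1 + ∑ M, t M • cliffordBasis Q b M)} := by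
  ext x
  rw [mem_congruenceKernel_iff (smul_mono_left hJK)]
  constructor
  · rintro ⟨a, ha, hunit, rfl⟩
    rw [isReducedUnit_one_add_iff hKJ ha] at hunit
    refine ⟨fun M => if M.card = 2 then (cliffordBasis Q b).repr a M else 0, fun M => ?_,
      fun M hM => if_neg hM, ?_⟩
    · dsimp only
      split_ifs
      · exact (mem_smul_top_iff_repr_mem _ K a).1 ha M
      · exact K.zero_mem
    · rw [Submodule.Quotient.eq, add_sub_add_left_eq_sub,
        mem_smul_top_iff_repr_mem (cliffordBasis Q b)]
      intro M
      rw [map_sub, Finsupp.sub_apply, Basis.repr_sum_self]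
      split_ifs with hM
      · rw [sub_self]
        exact J.zero_mem
      · rw [sub_zero]
        exact repr_mem_of_mem_spinTangent hb h2 hQ hunit hM
  · rintro ⟨t, ht, ht2, rfl⟩
    have ha : ∑ M, t M • cliffordBasis Q b M ∈ K • (⊤ : Submodule R (CliffordAlgebra Q)) :=
      Submodule.sum_mem _ fun M _ => smul_mem_smul (ht M) mem_top
    refine ⟨_, ha, (isReducedUnit_one_add_iff hKJ ha).2 (Submodule.sum_mem _ fun M _ => ?_), rfl⟩
    by_cases hM : M.card = 2
    · rw [cliffordBasis_apply]
      exact Submodule.smul_mem _ _ (orderedProd_mem_spinTangent hb _ hM)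
    · rw [ht2 M hM, zero_smul]
      exact Submodule.zero_mem _

end Kernel

section Dedekind

variable {R : Type*} [CommRing R] [IsDedekindDomain R]

theorem isSMulRegular_quotient_prime_pow {𝔭 : Ideal R} (hp : 𝔭.IsPrime) {x : R} (hx : x ∉ 𝔭)
    (n : ℕ) : IsSMulRegular (R ⧸ 𝔭 ^ n) x := by
  rw [isSMulRegular_quotient_iff_mem_of_smul_mem]
  intro y hy
  exact (hp.mul_mem_pow 𝔭 hy).resolve_left hx

theorem relIndex_mul_eq_absNorm [Module.Free ℤ R] [Module.Finite ℤ R] {I : Ideal R} (hI : I ≠ ⊥)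
    (J : Ideal R) : (I * J).toAddSubgroup.relIndex I.toAddSubgroup = Ideal.absNorm J := by
  have h := AddSubgroup.relIndex_mul_index (H := (I * J).toAddSubgroup) (K := I.toAddSubgroup)
    (Submodule.toAddSubgroup_mono Ideal.mul_le_left)
  rw [← Ideal.absNorm_eq_index, ← Ideal.absNorm_eq_index, map_mul, mul_comm] at h
  exact mul_left_cancel₀ (Ideal.absNorm_eq_zero_iff.not.2 hI) h

end Dedekind

section Diagonal

variable {R I : Type*} [CommRing R] [Fintype I] {c : I → R}
  {Q : QuadraticForm R (I → R)}

theorem apply_basisFun_of_diagonal (hQ : ∀ x, Q x = ∑ i, c i * x i ^ 2) (i : I) :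
    Q (Pi.basisFun R I i) = c i := by
  classical
  simp [hQ, Pi.single_apply]

theorem isOrtho_basisFun_of_diagonal (hQ : ∀ x, Q x = ∑ i, c i * x i ^ 2) :
    Pairwise fun i j => Q.IsOrtho (Pi.basisFun R I i) (Pi.basisFun R I j) := by
  classical
  intro i j hij
  rw [QuadraticMap.isOrtho_def, hQ, hQ, hQ, ← Finset.sum_add_distrib]
  refine Finset.sum_congr rfl fun l _ => ?_
  obtain rfl | hil := eq_or_ne l i
  · simp [hij]
  · simp [hil]

end Diagonal

end CliffordReduction

open CliffordReduction

theorem kernel_of_reduction_description_and_card_general {R V I : Type*} [CommRing R]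
    [AddCommGroup V] [Module R V] [LinearOrder I] [Fintype I] {Q : QuadraticForm R V}
    {b : Module.Basis I R V} (hb : Pairwise fun i j => Q.IsOrtho (b i) (b j))
    {J K : Ideal R} (hJK : J ≤ K) (hKJ : K * K ≤ J) (h2 : IsSMulRegular (R ⧸ J) (2 : R))
    (hQ : ∀ i, IsSMulRegular (R ⧸ J) (Q (b i))) :
    congruenceKernel (Q := Q) (J • ⊤) (K • ⊤) =
      {x | ∃ t : Finset I → R, (∀ M, t M ∈ K) ∧ (∀ M, M.card ≠ 2 → t M = 0) ∧
        x = Submodule.Quotient.mk (1 + ∑ M, t M • orderedProd (fun i => ι Q (b i)) M)} ∧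
    Nat.card (congruenceKernel (Q := Q) (J • ⊤) (K • ⊤)) =
      J.toAddSubgroup.relIndex K.toAddSubgroup ^ (Fintype.card I).choose 2 := by
  have hker := congruenceKernel_eq hb hJK hKJ h2 hQ
  constructor
  · simp only [hker, cliffordBasis_apply]
  · rw [hker, card_mk_add_sum_smul_basis_of_support, Fintype.card_finset_len]

/-- Let `Q` be the even Clifford `O_k`-order of the diagonal form `f` with unit diagonal
values `c i` modulo a prime `𝔭 ⊂ O_k` not containing `2`, and let `r ≥ 1`.  The kernel of
the reduction homomorphism `θ : (Q/𝔭^{r+1}Q)¹ → (Q/𝔭^{r}Q)¹` consists exactly of the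
classes of `1 + Σ_{|M|=2} t_M e_M` with `t_M ∈ 𝔭^r` (taken mod `𝔭^{r+1}`), and it has
cardinality `N(𝔭)^{n(n+1)/2}`. -/
theorem kernel_of_reduction_description_and_card
    (k : Type*) [Field k] [NumberField k] (n : ℕ)
    (c : Fin (n + 1) → 𝓞 k)
    (Qf : QuadraticForm (𝓞 k) (Fin (n + 1) → 𝓞 k))
    (hQf : ∀ x, Qf x = ∑ i, c i * x i ^ 2)
    (𝔭 : Ideal (𝓞 k)) (hp : 𝔭.IsPrime) (hp0 : 𝔭 ≠ ⊥)
    (h2 : (2 : 𝓞 k) ∉ 𝔭) (hc : ∀ i, c i ∉ 𝔭)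
    (r : ℕ) (hr : 1 ≤ r)
    (J1 J2 : Submodule (𝓞 k) (CliffordAlgebra Qf))
    (hJ1 : J1 = (𝔭 ^ (r + 1) : Ideal (𝓞 k)) • (⊤ : Submodule (𝓞 k) (CliffordAlgebra Qf)))
    (hJ2 : J2 = (𝔭 ^ r : Ideal (𝓞 k)) • (⊤ : Submodule (𝓞 k) (CliffordAlgebra Qf)))
    -- the standard basis elements `e_M` (ordered products of generators):
    (e : Finset (Fin (n + 1)) → CliffordAlgebra Qf)
    (he : ∀ M : Finset (Fin (n + 1)),
      e M = ((M.sort (· ≤ ·)).map fun i => ι Qf (Pi.single i 1)).prod)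
    -- the congruence kernel `K = ker θ ⊆ (Q/𝔭^{r+1}Q)¹`:
    (K : Set (CliffordAlgebra Qf ⧸ J1))
    (hK : K = {x : CliffordAlgebra Qf ⧸ J1 | (∃ s : CliffordAlgebra Qf,
        Submodule.Quotient.mk (p := J1) s = x ∧ s ∈ evenOdd Qf 0 ∧
        Submodule.Quotient.mk (p := J1) (s * reverse (Q := Qf) s)
          = Submodule.Quotient.mk (p := J1) 1 ∧
        ∀ v : Fin (n + 1) → 𝓞 k, ∃ w,
          Submodule.Quotient.mk (p := J1) (s * ι Qf v * reverse (Q := Qf) s)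
            = Submodule.Quotient.mk (p := J1) (ι Qf w)) ∧
      ∀ s : CliffordAlgebra Qf, Submodule.Quotient.mk (p := J1) s = x →
        Submodule.Quotient.mk (p := J2) s = Submodule.Quotient.mk (p := J2) 1}) :
    K = {x : CliffordAlgebra Qf ⧸ J1 | ∃ t : Finset (Fin (n + 1)) → 𝓞 k,
        (∀ M, t M ∈ 𝔭 ^ r) ∧ (∀ M, M.card ≠ 2 → t M = 0) ∧
        x = Submodule.Quotient.mk (p := J1)
          (1 + ∑ M : Finset (Fin (n + 1)), t M • e M)} ∧
    Nat.card K = Ideal.absNorm 𝔭 ^ (n * (n + 1) / 2) := by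
  subst hJ1 hJ2 hK
  obtain rfl : e = orderedProd fun i => ι Qf (Pi.basisFun (𝓞 k) _ i) :=
    funext fun M => by simp only [he, orderedProd, Pi.basisFun_apply]
  have regular (i) : IsSMulRegular (𝓞 k ⧸ 𝔭 ^ (r + 1)) (Qf (Pi.basisFun (𝓞 k) _ i)) :=
    isSMulRegular_quotient_prime_pow hp (by rw [apply_basisFun_of_diagonal hQf]; exact hc i) _
  have sq_le : 𝔭 ^ r * 𝔭 ^ r ≤ 𝔭 ^ (r + 1) :=
    (pow_add 𝔭 r r).ge.trans (Ideal.pow_le_pow_right (by omega))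
  obtain ⟨description, card⟩ := kernel_of_reduction_description_and_card_general
    (isOrtho_basisFun_of_diagonal hQf) (Ideal.pow_le_pow_right r.le_succ) sq_le
    (isSMulRegular_quotient_prime_pow hp h2 _) regular
  refine ⟨description, card.trans ?_⟩
  rw [pow_succ, relIndex_mul_eq_absNorm (pow_ne_zero r hp0), Fintype.card_fin,
    Nat.choose_two_right, Nat.add_sub_cancel, mul_comm (n + 1)]
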